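/- The second Rayleigh quotient of the Dirichlet Laplacian on the broken guide Γ is at least π²: for every two-dimensional subspace E ⊂ H¹₀(Γ), one has sup_{0≠u∈E} (∫_Γ|∇u|²dx / ∫_Γ|u|²dx) ≥ π². Consequently the Dirichlet Laplacian on Γ has at most one eigenvalue below π². -/

import Mathlib

noncomputable section
open MeasureTheory Set Real

/-- The interval `I = (-1,0)`. -/
def II : Set ℝ := Set.Ioo (-1) 0

/-- The broken guide `Γ = {x ∈ ℝ² : -1 < min(x₁,x₂) < 0}`. -/
def Gam : Set (ℝ × ℝ) := {p | -1 < min p.1 p.2 ∧ min p.1 p.2 < 0}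

/-- The box `□_L = {x : max(|x₁+1|,|x₂+1|) < L}`. -/
def Box (L : ℝ) : Set (ℝ × ℝ) := {p | |p.1 + 1| < L ∧ |p.2 + 1| < L}

/-- The finite guide `Γ_R = Γ ∩ □_{R+1}`. -/
def GamR (R : ℝ) : Set (ℝ × ℝ) := Gam ∩ Box (R + 1)

/-- The Neumann part `Σ_R = ∂Γ_R ∩ ∂□_{R+1}` of the boundary. -/
def Sig (R : ℝ) : Set (ℝ × ℝ) := frontier (GamR R) ∩ frontier (Box (R + 1))

/-- The Dirichlet part `∂Γ_R ∖ Σ_R` of the boundary. -/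
def DirB (R : ℝ) : Set (ℝ × ℝ) := frontier (GamR R) \ Sig R

/-- Squared gradient `|∇u|² = (∂₁u)² + (∂₂u)²`. -/
def gradSq2 (u : ℝ × ℝ → ℝ) (p : ℝ × ℝ) : ℝ :=
  (fderiv ℝ u p (1, 0)) ^ 2 + (fderiv ℝ u p (0, 1)) ^ 2

/-- Admissible functions for the mixed problem on `Γ_R`: `C¹` up to the boundary
(modelled by a globally `C¹` extension) vanishing on the Dirichlet part. -/
def AdmR (R : ℝ) (u : ℝ × ℝ → ℝ) : Prop :=
  ContDiff ℝ 1 u ∧ ∀ p ∈ DirB R, u p = 0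

/-- First Rayleigh quotient `λ₁(Γ_R)` of the mixed Dirichlet–Neumann Laplacian on `Γ_R`. -/
def lamR (R : ℝ) : ℝ :=
  sInf {r | ∃ u : ℝ × ℝ → ℝ, AdmR R u ∧ (∫ p in GamR R, (u p) ^ 2) ≠ 0 ∧
    r = (∫ p in GamR R, gradSq2 u p) / ∫ p in GamR R, (u p) ^ 2}

/-- First Rayleigh quotient `λ₁(Γ)` of the Dirichlet Laplacian on the broken guide `Γ`. -/
def lamG : ℝ :=
  sInf {r | ∃ u : ℝ × ℝ → ℝ, ContDiff ℝ 1 u ∧ HasCompactSupport u ∧ tsupport u ⊆ Gam ∧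
    (∫ p in Gam, (u p) ^ 2) ≠ 0 ∧
    r = (∫ p in Gam, gradSq2 u p) / ∫ p in Gam, (u p) ^ 2}

/-- `ω = √(π² − λ₁(Γ))`. -/
def omega : ℝ := Real.sqrt (π ^ 2 - lamG)

/-- Partial derivative `∂₁`. -/
def pd1 (u : ℝ × ℝ → ℝ) : ℝ × ℝ → ℝ := fun p => fderiv ℝ u p (1, 0)

/-- Partial derivative `∂₂`. -/
def pd2 (u : ℝ × ℝ → ℝ) : ℝ × ℝ → ℝ := fun p => fderiv ℝ u p (0, 1)

/-- Laplacian `Δ = ∂₁² + ∂₂²`. -/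
def lap2 (u : ℝ × ℝ → ℝ) (p : ℝ × ℝ) : ℝ := pd1 (pd1 u) p + pd2 (pd2 u) p

/-- Eigenfunction of the Dirichlet Laplacian on `Γ` with eigenvalue `lam`:
a nonzero function in `H¹₀(Γ) ∩ L²`, classical solution of `-Δu = λ u` in `Γ`. -/
def IsEigenGam (lam : ℝ) (u : ℝ × ℝ → ℝ) : Prop :=
  Continuous u ∧ (∀ p ∉ Gam, u p = 0) ∧ ContDiffOn ℝ 2 u Gam ∧
  IntegrableOn (fun p => (u p) ^ 2) Gam ∧ IntegrableOn (fun p => gradSq2 u p) Gam ∧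
  (∀ p ∈ Gam, -(lap2 u p) = lam * u p) ∧ (∃ p, u p ≠ 0)

/-!
Let `Q` be the corner square of `Γ`, over which its two half-strips meet. On each half-strip the
one-dimensional Dirichlet inequality across the strip gives energy at least `π²` times the squared
`L²` norm, and on `Q` the same bound holds for the functions of mean zero by the Neumann–Poincaré
inequality. Hence the energy of `u` is at least `π² (‖u‖² - (∫_Q u)²)`, first for test functions and
then, by density, on the form domain. The linear functional `u ↦ ∫_Q u` has a nonzero kernel in
every two-dimensional space, be it a trial space or the span of two eigenfunctions.
-/

section Wirtinger

variable {a b : ℝ} {f : ℝ → ℝ}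

/-- The Riccati form of Picone's identity: `f'² + (T f²)' - (T' - T²) f² = (f' + T f)²`. -/
lemma integral_riccati_mul_sq_le (hab : a ≤ b) {T T' : ℝ → ℝ}
    (hT : ∀ x ∈ Icc a b, HasDerivAt T (T' x) x) (hT' : ContinuousOn T' (Icc a b))
    (hf : ContDiff ℝ 1 f) (ha : f a = 0) (hb : f b = 0) :
    ∫ x in a..b, (T' x - T x ^ 2) * f x ^ 2 ≤ ∫ x in a..b, deriv f x ^ 2 := by
  rw [← uIcc_of_le hab] at hT hT'
  have hTc : ContinuousOn T (uIcc a b) := fun x hx => (hT x hx).continuousAt.continuousWithinAt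
  have hfc : ContinuousOn f (uIcc a b) := hf.continuous.continuousOn
  have hfc' : ContinuousOn (deriv f) (uIcc a b) := hf.continuous_deriv_one.continuousOn
  have boundary_terms :
      ∫ x in a..b, (T' x * f x ^ 2 + T x * (2 * f x * deriv f x)) = 0 := by
    rw [intervalIntegral.integral_eq_sub_of_hasDerivAt (f := fun x => T x * f x ^ 2)]
    · simp [ha, hb]
    · intro x hx
      have hfx := (hf.differentiable one_ne_zero x).hasDerivAt
      simpa using (hT x hx).fun_mul (hfx.fun_pow 2)
    · exact ContinuousOn.intervalIntegrable (by fun_prop)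
  rw [← sub_nonneg]
  calc (0 : ℝ) ≤ ∫ x in a..b, (deriv f x + T x * f x) ^ 2 :=
        intervalIntegral.integral_nonneg hab fun x _ => sq_nonneg _
    _ = ∫ x in a..b, (deriv f x ^ 2 - (T' x - T x ^ 2) * f x ^ 2
          + (T' x * f x ^ 2 + T x * (2 * f x * deriv f x))) := by
        congr! 2 with x
        ring
    _ = _ := by
        rw [intervalIntegral.integral_add, intervalIntegral.integral_sub, boundary_terms, add_zero]
        all_goals exact ContinuousOn.intervalIntegrable (by fun_prop)

lemma sq_mul_integral_sq_le_of_mul_lt_pi (hab : a ≤ b) (hf : ContDiff ℝ 1 f)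
    (ha : f a = 0) (hb : f b = 0) {k : ℝ} (hk : 0 ≤ k) (hkπ : k * (b - a) < π) :
    k ^ 2 * ∫ x in a..b, f x ^ 2 ≤ ∫ x in a..b, deriv f x ^ 2 := by
  set θ : ℝ → ℝ := fun x => k * (x - (a + b) / 2)
  have cos_pos : ∀ x ∈ Icc a b, 0 < cos (θ x) := fun x hx =>
    cos_pos_of_mem_Ioo ⟨by simp only [θ]; nlinarith [hx.1], by simp only [θ]; nlinarith [hx.2]⟩
  have hT : ∀ x ∈ Icc a b, HasDerivAt (fun x => k * tan (θ x)) (k ^ 2 * (1 + tan (θ x) ^ 2)) x := by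
    intro x hx
    have hθ : HasDerivAt θ (k * 1) x := ((hasDerivAt_id x).sub_const _).const_mul k
    refine (((hasDerivAt_tan (cos_pos x hx).ne').comp x hθ).const_mul k).congr_deriv ?_
    rw [one_div, ← inv_one_add_tan_sq (cos_pos x hx).ne', inv_inv]
    ring
  have hT' : ContinuousOn (fun x => k ^ 2 * (1 + tan (θ x) ^ 2)) (Icc a b) := by
    have htan : ContinuousOn (fun x => tan (θ x)) (Icc a b) := fun x hx =>
      ((continuousAt_tan.2 (cos_pos x hx).ne').comp
        (f := θ) (by fun_prop)).continuousWithinAt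
    fun_prop
  calc k ^ 2 * ∫ x in a..b, f x ^ 2
      = ∫ x in a..b, (k ^ 2 * (1 + tan (θ x) ^ 2) - (k * tan (θ x)) ^ 2) * f x ^ 2 := by
        rw [← intervalIntegral.integral_const_mul]
        congr! 2
        ring
    _ ≤ ∫ x in a..b, deriv f x ^ 2 := integral_riccati_mul_sq_le hab hT hT' hf ha hb

theorem wirtinger_of_eq_zero_endpoints (hab : a ≤ b) (hf : ContDiff ℝ 1 f)
    (ha : f a = 0) (hb : f b = 0) :
    π ^ 2 * ∫ x in a..b, f x ^ 2 ≤ (b - a) ^ 2 * ∫ x in a..b, deriv f x ^ 2 := by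
  rcases hab.eq_or_lt with rfl | hlt
  · simp
  have hpos : 0 < b - a := sub_pos.2 hlt
  have hlim : Filter.Tendsto (fun s => s ^ 2 * ∫ x in a..b, f x ^ 2) (nhdsWithin π (Iio π))
      (nhds (π ^ 2 * ∫ x in a..b, f x ^ 2)) :=
    (Continuous.tendsto (by fun_prop) π).mono_left nhdsWithin_le_nhds
  refine le_of_tendsto hlim ?_
  filter_upwards [Ioo_mem_nhdsLT pi_pos] with s hs
  have hs' : s / (b - a) * (b - a) = s := div_mul_cancel₀ s hpos.ne'
  calc s ^ 2 * ∫ x in a..b, f x ^ 2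
      = (b - a) ^ 2 * ((s / (b - a)) ^ 2 * ∫ x in a..b, f x ^ 2) := by
        rw [← mul_assoc, ← mul_pow, mul_comm (b - a), hs']
    _ ≤ (b - a) ^ 2 * ∫ x in a..b, deriv f x ^ 2 := by
        gcongr
        exact sq_mul_integral_sq_le_of_mul_lt_pi hab hf ha hb (div_nonneg hs.1.le hpos.le)
          (hs'.trans_lt hs.2)

lemma integral_const_mul_add_const_mul_sq {g : ℝ → ℝ} (hf : Continuous f) (hg : Continuous g)
    (s t : ℝ) :
    ∫ x in a..b, (s * f x + t * g x) ^ 2 =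
      s ^ 2 * (∫ x in a..b, f x ^ 2) + 2 * s * t * (∫ x in a..b, f x * g x)
        + t ^ 2 * ∫ x in a..b, g x ^ 2 := by
  have expand (x : ℝ) : (s * f x + t * g x) ^ 2
      = s ^ 2 * f x ^ 2 + 2 * s * t * (f x * g x) + t ^ 2 * g x ^ 2 := by ring
  simp only [expand]
  rw [intervalIntegral.integral_add, intervalIntegral.integral_add,
    intervalIntegral.integral_const_mul, intervalIntegral.integral_const_mul,
    intervalIntegral.integral_const_mul]
  all_goals exact Continuous.intervalIntegrable (by fun_prop) _ _

/-- Integrating `f` by parts against its primitive `F`, which vanishes at both ends, reduces this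
to the Dirichlet inequality for `F`. -/
theorem wirtinger_of_integral_eq_zero (hab : a ≤ b) (hf : ContDiff ℝ 1 f)
    (hmean : ∫ x in a..b, f x = 0) :
    π ^ 2 * ∫ x in a..b, f x ^ 2 ≤ (b - a) ^ 2 * ∫ x in a..b, deriv f x ^ 2 := by
  rcases hab.eq_or_lt with rfl | hlt
  · simp
  set F : ℝ → ℝ := fun x => ∫ t in a..x, f t
  have hF : ∀ x, HasDerivAt F (f x) x := fun x => hf.continuous.integral_hasStrictDerivAt a x
    |>.hasDerivAt
  have hF' : deriv F = f := funext fun x => (hF x).deriv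
  have hFC : ContDiff ℝ 1 F :=
    contDiff_one_iff_deriv.2 ⟨fun x => (hF x).differentiableAt, hF' ▸ hf.continuous⟩
  have hFa : F a = 0 := intervalIntegral.integral_same
  have hfc' : Continuous (deriv f) := hf.continuous_deriv_one
  have by_parts : ∫ x in a..b, F x * deriv f x = -∫ x in a..b, f x ^ 2 := by
    have := intervalIntegral.integral_mul_deriv_eq_deriv_mul (a := a) (b := b)
      (fun x _ => hF x) (fun x _ => (hf.differentiable one_ne_zero x).hasDerivAt)
      (hf.continuous.intervalIntegrable _ _) (hfc'.intervalIntegrable _ _)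
    simp only [this, show F b = 0 from hmean, hFa, pow_two]
    ring
  have dirichlet := wirtinger_of_eq_zero_endpoints hab hFC hFa hmean
  rw [hF'] at dirichlet
  have square_nonneg : 0 ≤ ∫ x in a..b, (π ^ 2 * F x + (b - a) ^ 2 * deriv f x) ^ 2 :=
    intervalIntegral.integral_nonneg hab fun x _ => sq_nonneg _
  rw [integral_const_mul_add_const_mul_sq hFC.continuous hfc', by_parts] at square_nonneg
  have hlen : 0 < (b - a) ^ 2 := pow_pos (sub_pos.2 hlt) 2
  refine le_of_mul_le_mul_left ?_ hlen
  linarith [mul_le_mul_of_nonneg_left dirichlet (sq_nonneg π)]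

end Wirtinger

section Variance

open ProbabilityTheory

variable {α β : Type*} [MeasurableSpace α] [MeasurableSpace β] {μ : Measure α} {ν : Measure β}
  [IsProbabilityMeasure μ] [IsProbabilityMeasure ν] {f : α × β → ℝ}

lemma ae_memLp_two_slice (hf : MemLp f 2 (μ.prod ν)) :
    ∀ᵐ x ∂μ, MemLp (fun y => f (x, y)) 2 ν := by
  filter_upwards [hf.aestronglyMeasurable.prodMk_left, hf.integrable_sq.prod_right_ae]
    with x hmeas hsq
  exact (memLp_two_iff_integrable_sq hmeas).2 hsq

lemma variance_slice_ae_eq (hf : MemLp f 2 (μ.prod ν)) :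
    (fun x => Var[fun y => f (x, y); ν]) =ᵐ[μ]
      fun x => (∫ y, f (x, y) ^ 2 ∂ν) - (∫ y, f (x, y) ∂ν) ^ 2 := by
  filter_upwards [ae_memLp_two_slice hf] with x hx
  rw [variance_eq_sub hx]
  rfl

lemma memLp_two_integral_slice (hf : MemLp f 2 (μ.prod ν)) :
    MemLp (fun x => ∫ y, f (x, y) ∂ν) 2 μ := by
  have hmeas := hf.aestronglyMeasurable.integral_prod_right'
  refine (memLp_two_iff_integrable_sq hmeas).2
    (hf.integrable_sq.integral_prod_left.mono' (hmeas.pow 2) ?_)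
  filter_upwards [variance_slice_ae_eq hf] with x hx
  rw [norm_of_nonneg (sq_nonneg _), ← sub_nonneg, ← hx]
  exact variance_nonneg _ _

theorem variance_prod (hf : MemLp f 2 (μ.prod ν)) :
    Var[f; μ.prod ν] =
      (∫ x, Var[fun y => f (x, y); ν] ∂μ) + Var[fun x => ∫ y, f (x, y) ∂ν; μ] := by
  rw [integral_congr_ae (variance_slice_ae_eq hf),
    integral_sub hf.integrable_sq.integral_prod_left (memLp_two_integral_slice hf).integrable_sq,
    variance_eq_sub hf, variance_eq_sub (memLp_two_integral_slice hf),
    ← integral_prod _ (hf.integrable one_le_two), ← integral_prod _ hf.integrable_sq]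
  simp only [Pi.pow_apply, sub_add_sub_cancel]

lemma variance_prod_swap (hf : MemLp f 2 (μ.prod ν)) :
    Var[f; μ.prod ν] =
      (∫ y, Var[fun x => f (x, y); μ] ∂ν) + Var[fun y => ∫ x, f (x, y) ∂μ; ν] := by
  have hswap := Measure.measurePreserving_swap (μ := ν) (ν := μ)
  rw [← hswap.variance_fun_comp hf.aemeasurable]
  exact variance_prod (hf.comp_measurePreserving hswap)

/-- Subtracting from `f` its mean in `y` leaves the variances in `y` unchanged and shifts the mean
in `x` by a constant; the two ways of conditioning `f - ∫ f dν` are then compared. -/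
lemma variance_integral_slice_le (hf : MemLp f 2 (μ.prod ν)) :
    Var[fun x => ∫ y, f (x, y) ∂ν; μ] ≤ ∫ y, Var[fun x => f (x, y); μ] ∂ν := by
  have hfint := hf.integrable one_le_two
  have hm := memLp_two_integral_slice hf
  set m : α → ℝ := fun x => ∫ y, f (x, y) ∂ν
  have hg : MemLp (fun p => f p - m p.1) 2 (μ.prod ν) := hf.sub (hm.comp_fst ν)
  have var_g : Var[fun p => f p - m p.1; μ.prod ν] = ∫ x, Var[fun y => f (x, y); ν] ∂μ := by
    have mean_zero : (fun x => ∫ y, f (x, y) - m x ∂ν) =ᵐ[μ] 0 := by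
      filter_upwards [hfint.prod_right_ae] with x hx
      simp [integral_sub hx (integrable_const _), m]
    rw [variance_prod hg, variance_congr mean_zero, variance_zero, add_zero]
    refine integral_congr_ae ?_
    filter_upwards [ae_memLp_two_slice hf] with x hx
    exact variance_sub_const hx.aestronglyMeasurable _
  have var_mean_g :
      Var[fun y => ∫ x, f (x, y) - m x ∂μ; ν] = Var[fun y => ∫ x, f (x, y) ∂μ; ν] := by
    rw [← variance_sub_const hfint.integral_prod_right.aestronglyMeasurable (∫ x, m x ∂μ)]
    refine variance_congr ?_
    filter_upwards [hfint.prod_left_ae] with y hy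
    exact integral_sub hy (hm.integrable one_le_two)
  have mean_variance_nonneg : 0 ≤ ∫ y, Var[fun x => f (x, y) - m x; μ] ∂ν :=
    integral_nonneg fun y => variance_nonneg _ _
  linarith [variance_prod hf, variance_prod_swap hf, variance_prod_swap hg]

theorem variance_prod_le (hf : MemLp f 2 (μ.prod ν)) :
    Var[f; μ.prod ν] ≤
      (∫ x, Var[fun y => f (x, y); ν] ∂μ) + ∫ y, Var[fun x => f (x, y); μ] ∂ν := by
  rw [variance_prod hf]
  gcongr
  exact variance_integral_slice_le hf

end Variance

section QuadraticForms

open Module Function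

variable {V H K : Type*} [AddCommGroup V] [Module ℝ V]
  [NormedAddCommGroup H] [InnerProductSpace ℝ H] [NormedAddCommGroup K] [InnerProductSpace ℝ K]
  {ι : V →ₗ[ℝ] H} {S : V →ₗ[ℝ] K} {ℓ : V →ₗ[ℝ] ℝ} {c : ℝ}

lemma exists_ne_zero_of_one_lt_finrank (hV : 1 < finrank ℝ V) (ℓ : V →ₗ[ℝ] ℝ) :
    ∃ v, v ≠ 0 ∧ ℓ v = 0 := by
  have : FiniteDimensional ℝ V := FiniteDimensional.of_finrank_pos (by lia)
  obtain ⟨v, hv, hv0⟩ := (Submodule.ne_bot_iff _).1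
    (LinearMap.ker_ne_bot_of_finrank_lt (f := ℓ) (by simpa using hV))
  exact ⟨v, hv0, hv⟩

lemma exists_norm_le_mul_norm_of_injective [FiniteDimensional ℝ V] (hι : Injective ι)
    (S : V →ₗ[ℝ] K) : ∃ C, ∀ v, ‖S v‖ ≤ C * ‖ι v‖ := by
  let e := LinearEquiv.ofInjective ι hι
  let T : LinearMap.range ι →L[ℝ] K := (S ∘ₗ e.symm.toLinearMap).toContinuousLinearMap
  exact ⟨‖T‖, fun v => by simpa [T, e] using T.le_opNorm (e v)⟩

theorem le_sSup_rayleigh (hV : 1 < finrank ℝ V) (hι : Injective ι)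
    (hc : ∀ v, ℓ v = 0 → c * ‖ι v‖ ^ 2 ≤ ‖S v‖ ^ 2) :
    c ≤ sSup {r | ∃ v, ‖ι v‖ ^ 2 ≠ 0 ∧ r = ‖S v‖ ^ 2 / ‖ι v‖ ^ 2} := by
  have : FiniteDimensional ℝ V := FiniteDimensional.of_finrank_pos (by lia)
  obtain ⟨C, hC⟩ := exists_norm_le_mul_norm_of_injective hι S
  have bounded : BddAbove {r | ∃ v, ‖ι v‖ ^ 2 ≠ 0 ∧ r = ‖S v‖ ^ 2 / ‖ι v‖ ^ 2} := by
    refine ⟨C ^ 2, ?_⟩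
    rintro r ⟨v, -, rfl⟩
    refine div_le_of_le_mul₀ (sq_nonneg _) (sq_nonneg _) ?_
    rw [← mul_pow]
    exact pow_le_pow_left₀ (norm_nonneg _) (hC v) 2
  obtain ⟨v, hv0, hv⟩ := exists_ne_zero_of_one_lt_finrank hV ℓ
  have norm_pos : 0 < ‖ι v‖ ^ 2 :=
    pow_pos (norm_pos_iff.2 ((map_ne_zero_iff ι hι).2 hv0)) 2
  exact ((le_div_iff₀ norm_pos).2 (hc v hv)).trans (le_csSup bounded ⟨v, norm_pos.ne', rfl⟩)

open scoped InnerProductSpace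

/-- A nonzero combination of `u` and `u'` in the kernel of `ℓ` would have a Rayleigh quotient below
`c`, because `ι u` and `ι u'` are orthogonal unless the two eigenvalues agree. -/
theorem not_linearIndependent_of_eigenvalues_lt (hι : Injective ι)
    (hc : ∀ v, ℓ v = 0 → c * ‖ι v‖ ^ 2 ≤ ‖S v‖ ^ 2) {lam lam' : ℝ} (hlam : lam < c)
    (hlam' : lam' < c) {u u' : V} (hu : ∀ v, ⟪S u, S v⟫_ℝ = lam * ⟪ι u, ι v⟫_ℝ)
    (hu' : ∀ v, ⟪S u', S v⟫_ℝ = lam' * ⟪ι u', ι v⟫_ℝ) :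
    ¬ LinearIndependent ℝ ![u, u'] := by
  intro hindep
  obtain ⟨v, hv0, hv⟩ := exists_ne_zero_of_one_lt_finrank
    (V := Submodule.span ℝ (range ![u, u'])) (by simp [finrank_span_eq_card hindep])
    (ℓ.domRestrict _)
  obtain ⟨v, hmem⟩ := v
  obtain ⟨α, β, rfl⟩ : ∃ α β : ℝ, α • u + β • u' = v := by
    rwa [Matrix.range_cons_cons_empty, Submodule.mem_span_pair] at hmem
  replace hv0 : α • u + β • u' ≠ 0 := fun h => hv0 (Subtype.ext h)
  have orthogonal : (lam - lam') * ⟪ι u, ι u'⟫_ℝ = 0 := by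
    have h := hu' u
    rw [real_inner_comm, hu u', real_inner_comm (ι u)] at h
    linarith
  have norm_pos : 0 < ‖ι (α • u + β • u')‖ ^ 2 :=
    pow_pos (norm_pos_iff.2 ((map_ne_zero_iff ι hι).2 hv0)) 2
  have rayleigh_le : ‖S (α • u + β • u')‖ ^ 2 ≤ max lam lam' * ‖ι (α • u + β • u')‖ ^ 2 := by
    rw [← real_inner_self_eq_norm_sq, ← real_inner_self_eq_norm_sq]
    simp only [map_add, map_smul, inner_add_left, inner_add_right, real_inner_smul_left,
      real_inner_smul_right, hu, hu', real_inner_comm (ι u) (ι u')]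
    rcases mul_eq_zero.1 orthogonal with h | h
    · rw [sub_eq_zero.1 h, max_self]
      linarith
    · have hX := mul_le_mul_of_nonneg_right (le_max_left lam lam')
        (mul_nonneg (sq_nonneg α) (real_inner_self_nonneg (x := ι u)))
      have hY := mul_le_mul_of_nonneg_right (le_max_right lam lam')
        (mul_nonneg (sq_nonneg β) (real_inner_self_nonneg (x := ι u')))
      rw [h]
      linarith
  exact (hc _ hv).not_gt
    (rayleigh_le.trans_lt (mul_lt_mul_of_pos_right (max_lt hlam hlam') norm_pos))

end QuadraticForms

section Truncation

open Filter
open scoped Topology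

variable {E : Type*} [NormedAddCommGroup E] [NormedSpace ℝ E] [HasContDiffBump E]
  {χ : ContDiffBump (0 : E)} {f : ContDiffBump (0 : ℝ)} {u : E → ℝ} {r : ℝ} {p : E}

/-- The function `u` with its values of size less than about `1 / r`, and its values outside a ball
of radius about `r`, removed: as `r → ∞` this approximates a function vanishing off an open set by
functions compactly supported in it. -/
def truncate (χ : ContDiffBump (0 : E)) (f : ContDiffBump (0 : ℝ)) (r : ℝ) (u : E → ℝ)
    (p : E) : ℝ :=
  χ (r⁻¹ • p) * ((1 - f (r * u p)) * u p)

lemma truncate_eventuallyEq_zero (hu : ContinuousAt u p) (hp : u p = 0) :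
    truncate χ f r u =ᶠ[𝓝 p] 0 := by
  have hsmall : ∀ᶠ q in 𝓝 p, |r * u q| < f.rIn :=
    ContinuousAt.eventually_lt (by fun_prop) (by fun_prop) (by simp [hp, f.rIn_pos])
  filter_upwards [hsmall] with q hq
  simp [truncate, f.one_of_mem_closedBall (x := r * u q) (by simpa [abs_mul] using hq.le)]

lemma truncate_eventuallyEq_self (hu : ContinuousAt u p) (hr : 0 < r) (hpr : ‖p‖ < r * χ.rIn)
    (hup : f.rOut < r * |u p|) :
    truncate χ f r u =ᶠ[𝓝 p] u := by
  have hlarge : ∀ᶠ q in 𝓝 p, f.rOut < r * |u q| :=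
    ContinuousAt.eventually_lt (by fun_prop) (by fun_prop) hup
  have hnear : ∀ᶠ q in 𝓝 p, ‖q‖ < r * χ.rIn :=
    ContinuousAt.eventually_lt (by fun_prop) (by fun_prop) hpr
  filter_upwards [hlarge, hnear] with q hq hqr
  have hχ : χ (r⁻¹ • q) = 1 := by
    refine χ.one_of_mem_closedBall ?_
    rw [mem_closedBall_zero_iff, norm_smul, norm_inv, norm_of_nonneg hr.le, inv_mul_le_iff₀ hr]
    exact hqr.le
  have hf : f (r * u q) = 0 := by
    refine f.zero_of_le_dist ?_
    rw [dist_zero_right, norm_mul, norm_of_nonneg hr.le]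
    exact hq.le
  rw [truncate, hχ, hf, sub_zero, one_mul, one_mul]

lemma eventually_truncate_eventuallyEq_self (hu : ContinuousAt u p) (hp : u p ≠ 0) :
    ∀ᶠ r in atTop, truncate χ f r u =ᶠ[𝓝 p] u := by
  filter_upwards [eventually_gt_atTop 0,
    (tendsto_id.atTop_mul_const χ.rIn_pos).eventually_gt_atTop ‖p‖,
    (tendsto_id.atTop_mul_const (abs_pos.2 hp)).eventually_gt_atTop f.rOut] with r hr hpr hup
  exact truncate_eventuallyEq_self hu hr hpr hup

lemma norm_one_sub_bump_mul_le (f : ContDiffBump (0 : ℝ)) (s t : ℝ) : ‖(1 - f s) * t‖ ≤ ‖t‖ := by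
  rw [norm_mul, norm_of_nonneg (sub_nonneg.2 f.le_one)]
  exact mul_le_of_le_one_left (norm_nonneg _) (sub_le_self _ f.nonneg)

lemma norm_truncate_le (r : ℝ) (u : E → ℝ) (p : E) : ‖truncate χ f r u p‖ ≤ ‖u p‖ := by
  rw [truncate, norm_mul, norm_of_nonneg χ.nonneg]
  exact (mul_le_of_le_one_left (norm_nonneg _) χ.le_one).trans (norm_one_sub_bump_mul_le f _ _)

lemma contDiffAt_truncate (hu : ContDiffAt ℝ 1 u p) : ContDiffAt ℝ 1 (truncate χ f r u) p :=
  (χ.contDiffAt.comp p (contDiffAt_id.const_smul r⁻¹)).mul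
    ((contDiffAt_const.sub (f.contDiffAt.comp p (contDiffAt_const.mul hu))).mul hu)

lemma exists_hasDerivAt_one_sub_bump_mul (f : ContDiffBump (0 : ℝ)) :
    ∃ M, 0 ≤ M ∧ ∀ r s, ∃ d, HasDerivAt (fun s => (1 - f (r * s)) * s) d s ∧ |d| ≤ M := by
  have hf : ContDiff ℝ 1 f := f.contDiff
  have hcont : Continuous fun t => t * deriv f t := continuous_id.mul hf.continuous_deriv_one
  obtain ⟨M, hM⟩ := f.hasCompactSupport.deriv.mul_left.exists_bound_of_continuous hcont
  refine ⟨1 + M, add_nonneg zero_le_one ((norm_nonneg _).trans (hM 0)), fun r s =>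
    ⟨(1 - f (r * s)) - r * s * deriv f (r * s), ?_, ?_⟩⟩
  · have hfr := (hf.differentiable one_ne_zero (r * s)).hasDerivAt.comp s
      ((hasDerivAt_id s).const_mul r)
    refine ((hfr.const_sub 1).mul (hasDerivAt_id s)).congr_deriv ?_
    simp only [id, Function.comp_apply]
    ring
  · refine (abs_sub _ _).trans (add_le_add ?_ (hM _))
    rw [abs_of_nonneg (sub_nonneg.2 f.le_one)]
    exact sub_le_self _ f.nonneg

lemma exists_norm_fderiv_truncate_le [FiniteDimensional ℝ E] (χ : ContDiffBump (0 : E))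
    (f : ContDiffBump (0 : ℝ)) :
    ∃ C M : ℝ, ∀ r, 1 ≤ r → ∀ (u : E → ℝ) (p : E), DifferentiableAt ℝ u p →
      ‖fderiv ℝ (truncate χ f r u) p‖ ≤ M * ‖fderiv ℝ u p‖ + C * ‖u p‖ := by
  have hχ : ContDiff ℝ 1 χ := χ.contDiff
  obtain ⟨C, hC⟩ := (χ.hasCompactSupport.fderiv ℝ).exists_bound_of_continuous
    (hχ.continuous_fderiv one_ne_zero)
  obtain ⟨M, _, hM⟩ := exists_hasDerivAt_one_sub_bump_mul f
  refine ⟨C, M, fun r hr u p hu => ?_⟩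
  obtain ⟨d, hd, hdM⟩ := hM r (u p)
  have hχd : HasFDerivAt (fun q => χ (r⁻¹ • q)) (r⁻¹ • fderiv ℝ χ (r⁻¹ • p)) p := by
    simpa [Function.comp_def] using (hχ.differentiable one_ne_zero (r⁻¹ • p)).hasFDerivAt.comp p
      ((hasFDerivAt_id p).const_smul r⁻¹)
  have hud : HasFDerivAt (fun q => (1 - f (r * u q)) * u q) (d • fderiv ℝ u p) p :=
    hd.comp_hasFDerivAt p hu.hasFDerivAt
  have hr' : ‖r⁻¹‖ ≤ 1 := by
    rw [norm_inv, norm_of_nonneg (zero_le_one.trans hr)]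
    exact inv_le_one_of_one_le₀ hr
  have hfu : ‖(1 - f (r * u p)) * u p‖ ≤ ‖u p‖ := norm_one_sub_bump_mul_le f _ _
  have : 0 ≤ C := (norm_nonneg _).trans (hC 0)
  rw [show fderiv ℝ (truncate χ f r u) p = _ from (hχd.mul hud).fderiv]
  calc _ ≤ ‖χ (r⁻¹ • p)‖ * (‖d‖ * ‖fderiv ℝ u p‖)
        + ‖(1 - f (r * u p)) * u p‖ * (‖r⁻¹‖ * ‖fderiv ℝ χ (r⁻¹ • p)‖) := by
        refine (norm_add_le _ _).trans_eq ?_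
        rw [norm_smul, norm_smul, norm_smul, norm_smul]
    _ ≤ 1 * (M * ‖fderiv ℝ u p‖) + ‖u p‖ * (1 * C) := by
        gcongr
        · rw [norm_of_nonneg χ.nonneg]
          exact χ.le_one
        · exact hdM
        · exact hC _
    _ = M * ‖fderiv ℝ u p‖ + C * ‖u p‖ := by ring

lemma contDiff_truncate {Ω : Set E} (hΩ : IsOpen Ω) (hu : Continuous u) (h0 : ∀ p ∉ Ω, u p = 0)
    (hu1 : ContDiffOn ℝ 1 u Ω) : ContDiff ℝ 1 (truncate χ f r u) := by
  refine contDiff_iff_contDiffAt.2 fun p => ?_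
  by_cases hp : p ∈ Ω
  · exact contDiffAt_truncate (hu1.contDiffAt (hΩ.mem_nhds hp))
  · exact contDiffAt_const.congr_of_eventuallyEq
      (truncate_eventuallyEq_zero hu.continuousAt (h0 p hp))

lemma tsupport_truncate_subset {Ω : Set E} (hu : Continuous u) (h0 : ∀ p ∉ Ω, u p = 0) :
    tsupport (truncate χ f r u) ⊆ Ω := by
  intro p hp
  by_contra hpΩ
  exact (notMem_tsupport_iff_eventuallyEq.2
    (truncate_eventuallyEq_zero hu.continuousAt (h0 p hpΩ))) hp

lemma hasCompactSupport_truncate [FiniteDimensional ℝ E] (hr : r ≠ 0) :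
    HasCompactSupport (truncate χ f r u) :=
  (χ.hasCompactSupport.comp_homeomorph (Homeomorph.smulOfNeZero r⁻¹ (inv_ne_zero hr))).mul_right

end Truncation

section DominatedConvergence

open Filter
open scoped Topology ENNReal

lemma tendsto_eLpNorm_sub_of_dominated {α F : Type*} [MeasurableSpace α] {μ : Measure α}
    [NormedAddCommGroup F] {q : ℝ≥0∞} (hq0 : q ≠ 0) (hq : q ≠ ∞) {f : ℕ → α → F} {g : α → F}
    {b : α → ℝ} (hf : ∀ n, AEStronglyMeasurable (f n) μ) (hg : AEStronglyMeasurable g μ)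
    (hb : MemLp b q μ) (hbound : ∀ n, ∀ᵐ x ∂μ, ‖f n x - g x‖ ≤ b x)
    (hlim : ∀ᵐ x ∂μ, Tendsto (fun n => f n x) atTop (𝓝 (g x))) :
    Tendsto (fun n => eLpNorm (f n - g) q μ) atTop (𝓝 0) := by
  have hq' : 0 < q.toReal := ENNReal.toReal_pos hq0 hq
  simp only [eLpNorm_eq_lintegral_rpow_enorm_toReal hq0 hq, Pi.sub_apply]
  have lintegral_tendsto : Tendsto (fun n => ∫⁻ x, ‖f n x - g x‖ₑ ^ q.toReal ∂μ) atTop (𝓝 0) := by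
    rw [← lintegral_zero (μ := μ)]
    refine tendsto_lintegral_of_dominated_convergence' (fun x => ‖b x‖ₑ ^ q.toReal)
      (fun n => ((hf n).sub hg).enorm.pow_const _) (fun n => ?_)
      (lintegral_rpow_enorm_lt_top_of_eLpNorm_lt_top hq0 hq hb.2).ne ?_
    · filter_upwards [hbound n] with x hx
      gcongr
      exact enorm_le_iff_norm_le.2 (hx.trans (le_norm_self _))
    · filter_upwards [hlim] with x hx
      simpa [hq'] using (hx.sub_const (g x)).enorm.ennrpow_const q.toReal
  simpa [hq'] using lintegral_tendsto.ennrpow_const (1 / q.toReal)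

end DominatedConvergence

section NullGradient

variable {E : Type*} [NormedAddCommGroup E] [NormedSpace ℝ E] [FiniteDimensional ℝ E]
  [MeasurableSpace E] [BorelSpace E] {μ : Measure E} [μ.IsAddHaarMeasure]

/-- The density-point argument is in `ApproximatesLinearOn.norm_fderiv_sub_le`, applied to the maps
`p ↦ u p • e`. -/
lemma ae_fderiv_eq_zero_of_eq_zero {u : E → ℝ} (hu : Measurable u) :
    ∀ᵐ p ∂μ, u p = 0 → fderiv ℝ u p = 0 := by
  set s : Set E := {p | u p = 0} ∩ {p | DifferentiableAt ℝ u p}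
  have hs : MeasurableSet s :=
    (hu (measurableSet_singleton 0)).inter (measurableSet_of_differentiableAt ℝ u)
  rcases subsingleton_or_nontrivial E with hE | hE
  · exact ae_of_all _ fun p _ => Subsingleton.elim _ _
  obtain ⟨e, he⟩ := exists_ne (0 : E)
  have happrox : ApproximatesLinearOn (fun p => u p • e) (0 : E →L[ℝ] E) s 0 := by
    intro p hp q hq
    simp [show u p = 0 from hp.1, show u q = 0 from hq.1]
  have smulRight_eq_zero := happrox.norm_fderiv_sub_le μ hs (fun p => (fderiv ℝ u p).smulRight e)
    fun p hp => (hp.2.hasFDerivAt.smul_const e).hasFDerivWithinAt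
  filter_upwards [(ae_restrict_iff' hs).1 smulRight_eq_zero] with p hp hp0
  by_cases hd : DifferentiableAt ℝ u p
  · simpa [he] using hp ⟨hp0, hd⟩
  · exact fderiv_zero_of_not_differentiableAt hd

end NullGradient

section FormDomain

open Filter TopologicalSpace
open scoped Topology Distributions

variable {E : Type*} [NormedAddCommGroup E] [NormedSpace ℝ E] [MeasurableSpace E]
  {Ω : Opens E} {μ : Measure E}

/-- The functions in the form domain of the Dirichlet Laplacian on `Ω`, restricted to those which
are continuous on the whole space and `C¹` in `Ω`. Test functions and classical eigenfunctions are
of this kind; the boundary condition of `H¹₀(Ω)` is encoded by the vanishing off `Ω`. -/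
structure MemFormDomain (Ω : Opens E) (μ : Measure E) (u : E → ℝ) : Prop where
  continuous : Continuous u
  eq_zero : ∀ p ∉ Ω, u p = 0
  contDiffOn : ContDiffOn ℝ 1 u Ω
  memLp : MemLp u 2 (μ.restrict Ω)
  memLp_fderiv : MemLp (fderiv ℝ u) 2 (μ.restrict Ω)

namespace MemFormDomain

variable {u v : E → ℝ}

lemma differentiableAt (hu : MemFormDomain Ω μ u) {p : E} (hp : p ∈ Ω) : DifferentiableAt ℝ u p :=
  (hu.contDiffOn.contDiffAt (Ω.isOpen.mem_nhds hp)).differentiableAt one_ne_zero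

lemma fderiv_add_ae_eq [BorelSpace E] (hu : MemFormDomain Ω μ u) (hv : MemFormDomain Ω μ v) :
    fderiv ℝ (u + v) =ᵐ[μ.restrict Ω] fderiv ℝ u + fderiv ℝ v := by
  filter_upwards [ae_restrict_mem Ω.isOpen.measurableSet] with p hp
  exact fderiv_add (hu.differentiableAt hp) (hv.differentiableAt hp)

lemma add [BorelSpace E] (hu : MemFormDomain Ω μ u) (hv : MemFormDomain Ω μ v) :
    MemFormDomain Ω μ (u + v) where
  continuous := hu.continuous.add hv.continuous
  eq_zero p hp := by simp [hu.eq_zero p hp, hv.eq_zero p hp]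
  contDiffOn := hu.contDiffOn.add hv.contDiffOn
  memLp := hu.memLp.add hv.memLp
  memLp_fderiv := (memLp_congr_ae (hu.fderiv_add_ae_eq hv)).2
    (MemLp.add (ε := E →L[ℝ] ℝ) hu.memLp_fderiv hv.memLp_fderiv)

lemma const_smul (hu : MemFormDomain Ω μ u) (a : ℝ) : MemFormDomain Ω μ (a • u) where
  continuous := hu.continuous.const_smul a
  eq_zero p hp := by simp [hu.eq_zero p hp]
  contDiffOn := hu.contDiffOn.const_smul a
  memLp := hu.memLp.const_smul a
  memLp_fderiv := by simpa only [fderiv_const_smul_field] using hu.memLp_fderiv.const_smul a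

end MemFormDomain

variable [BorelSpace E]

/-- The functions satisfying `MemFormDomain`, as a vector space. -/
def formDomain (Ω : Opens E) (μ : Measure E) : Submodule ℝ (E → ℝ) where
  carrier := {u | MemFormDomain Ω μ u}
  zero_mem' :=
    { continuous := continuous_zero
      eq_zero := fun _ _ => rfl
      contDiffOn := contDiffOn_const
      memLp := MemLp.zero'
      memLp_fderiv := by
        rw [fderiv_zero]
        exact MemLp.zero (ε := E →L[ℝ] ℝ) }
  add_mem' := MemFormDomain.add
  smul_mem' a _ hu := hu.const_smul a

/-- The inclusion of the form domain in `L²(Ω)`. -/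
def toL2 : formDomain Ω μ →ₗ[ℝ] Lp ℝ 2 (μ.restrict Ω) where
  toFun u := u.2.memLp.toLp u
  map_add' _ _ := rfl
  map_smul' _ _ := rfl

/-- The derivative as an operator from the form domain to `L²(Ω)`. -/
def fderivL2 : formDomain Ω μ →ₗ[ℝ] Lp (E →L[ℝ] ℝ) 2 (μ.restrict Ω) where
  toFun u := u.2.memLp_fderiv.toLp (fderiv ℝ u)
  map_add' u v := by
    rw [← MemLp.toLp_add]
    exact MemLp.toLp_congr _ _ (u.2.fderiv_add_ae_eq v.2)
  map_smul' a u := by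
    rw [RingHom.id_apply, ← MemLp.toLp_const_smul]
    exact MemLp.toLp_congr _ _ (ae_of_all _ fun p => congrFun (fderiv_const_smul_field a) p)

lemma toL2_injective [μ.IsOpenPosMeasure] : Function.Injective (toL2 (Ω := Ω) (μ := μ)) := by
  intro u v huv
  ext p
  by_cases hp : p ∈ Ω
  · exact Measure.eqOn_open_of_ae_eq ((MemLp.toLp_eq_toLp_iff u.2.memLp v.2.memLp).1 huv) Ω.isOpen
      u.2.continuous.continuousOn v.2.continuous.continuousOn hp
  · rw [u.2.eq_zero p hp, v.2.eq_zero p hp]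

lemma memFormDomain_testFunction [IsFiniteMeasureOnCompacts μ] (φ : 𝓓^{1}(Ω, ℝ)) :
    MemFormDomain Ω μ φ :=
  have hφ : ContDiff ℝ 1 φ := φ.contDiff
  { continuous := hφ.continuous
    eq_zero := fun _ hp => image_eq_zero_of_notMem_tsupport fun h => hp (φ.tsupport_subset h)
    contDiffOn := hφ.contDiffOn
    memLp := (hφ.continuous.memLp_of_hasCompactSupport φ.hasCompactSupport).restrict _
    memLp_fderiv := ((hφ.continuous_fderiv one_ne_zero).memLp_of_hasCompactSupport
      (φ.hasCompactSupport.fderiv ℝ)).restrict _ }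

/-- Test functions as elements of the form domain. -/
def testToForm [IsFiniteMeasureOnCompacts μ] (φ : 𝓓^{1}(Ω, ℝ)) : formDomain Ω μ :=
  ⟨φ, memFormDomain_testFunction φ⟩

lemma exists_testToForm_eq_truncate [FiniteDimensional ℝ E] [IsFiniteMeasureOnCompacts μ]
    (u : formDomain Ω μ) (χ : ContDiffBump (0 : E)) (f : ContDiffBump (0 : ℝ)) {r : ℝ}
    (hr : r ≠ 0) : ∃ φ : 𝓓^{1}(Ω, ℝ), (testToForm φ : formDomain Ω μ) = truncate χ f r u :=
  ⟨⟨_, contDiff_truncate Ω.isOpen u.2.continuous u.2.eq_zero u.2.contDiffOn,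
    hasCompactSupport_truncate hr, tsupport_truncate_subset u.2.continuous u.2.eq_zero⟩, rfl⟩

/-- Truncation converges at the points where `u ≠ 0`; elsewhere it vanishes, and so does the
derivative of `u` at almost all of these points. -/
lemma ae_eventually_truncate_eq [FiniteDimensional ℝ E] [μ.IsAddHaarMeasure] {u : E → ℝ}
    (hu : Continuous u) (χ : ContDiffBump (0 : E)) (f : ContDiffBump (0 : ℝ)) :
    ∀ᵐ p ∂μ, ∀ᶠ r in atTop, truncate χ f r u p = u p ∧
      fderiv ℝ (truncate χ f r u) p = fderiv ℝ u p := by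
  filter_upwards [ae_fderiv_eq_zero_of_eq_zero hu.measurable] with p hp
  by_cases h0 : u p = 0
  · refine Eventually.of_forall fun r => ?_
    have h := truncate_eventuallyEq_zero (χ := χ) (f := f) (r := r) hu.continuousAt h0
    rw [h.eq_of_nhds, h.fderiv_eq, h0, hp h0, fderiv_zero]
    exact ⟨rfl, rfl⟩
  · filter_upwards [eventually_truncate_eventuallyEq_self (χ := χ) (f := f) hu.continuousAt h0]
      with r hr
    exact ⟨hr.eq_of_nhds, hr.fderiv_eq⟩

theorem mem_closure_range_testToForm [FiniteDimensional ℝ E] [μ.IsAddHaarMeasure]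
    (u : formDomain Ω μ) :
    (toL2 u, fderivL2 u) ∈
      closure (range fun φ : 𝓓^{1}(Ω, ℝ) => (toL2 (testToForm φ), fderivL2 (testToForm φ))) := by
  let χ : ContDiffBump (0 : E) := default
  let f : ContDiffBump (0 : ℝ) := default
  obtain ⟨C, M, hCM⟩ := exists_norm_fderiv_truncate_le χ f
  let r : ℕ → ℝ := fun n => n + 1
  have hr : ∀ n, 1 ≤ r n := fun n => le_add_of_nonneg_left n.cast_nonneg
  have hr_lim : Tendsto r atTop atTop :=
    tendsto_atTop_add_const_right _ _ tendsto_natCast_atTop_atTop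
  choose φ hφ using fun n =>
    exists_testToForm_eq_truncate u χ f (one_pos.trans_le (hr n)).ne'
  have hlim : ∀ᵐ p ∂μ.restrict Ω, ∀ᶠ n in atTop,
      (testToForm (φ n) : formDomain Ω μ).1 p = u.1 p ∧
        fderiv ℝ (testToForm (φ n) : formDomain Ω μ).1 p = fderiv ℝ u.1 p := by
    filter_upwards [ae_restrict_of_ae (ae_eventually_truncate_eq u.2.continuous χ f)] with p hp
    simpa only [hφ] using hr_lim.eventually hp
  have value_tendsto : Tendsto (fun n => toL2 (testToForm (φ n))) atTop (𝓝 (toL2 u)) := by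
    refine (Lp.tendsto_Lp_iff_tendsto_eLpNorm'' _ (fun n => (testToForm (φ n)).2.memLp) _
      u.2.memLp).2 (tendsto_eLpNorm_sub_of_dominated two_ne_zero ENNReal.ofNat_ne_top
      (fun n => (testToForm (φ n)).2.memLp.1) u.2.memLp.1
      (u.2.memLp.norm.const_mul 2) (fun n => ae_of_all _ fun p => ?_) ?_)
    · rw [hφ n, two_mul]
      exact (norm_sub_le _ _).trans (add_le_add_left (norm_truncate_le _ _ _) _)
    · filter_upwards [hlim] with p hp
      exact tendsto_const_nhds.congr' (hp.mono fun n hn => hn.1.symm)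
  have fderiv_tendsto : Tendsto (fun n => fderivL2 (testToForm (φ n))) atTop (𝓝 (fderivL2 u)) := by
    refine (Lp.tendsto_Lp_iff_tendsto_eLpNorm'' _ (fun n => (testToForm (φ n)).2.memLp_fderiv) _
      u.2.memLp_fderiv).2 (tendsto_eLpNorm_sub_of_dominated two_ne_zero ENNReal.ofNat_ne_top
      (fun n => (testToForm (φ n)).2.memLp_fderiv.1) u.2.memLp_fderiv.1
      (((u.2.memLp_fderiv.norm.const_mul M).add (u.2.memLp.norm.const_mul C)).add
        u.2.memLp_fderiv.norm) (fun n => ?_) ?_)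
    · filter_upwards [ae_restrict_mem Ω.isOpen.measurableSet] with p hp
      rw [hφ n]
      exact (norm_sub_le _ _).trans (add_le_add_left (hCM _ (hr n) _ _ (u.2.differentiableAt hp)) _)
    · filter_upwards [hlim] with p hp
      exact tendsto_const_nhds.congr' (hp.mono fun n hn => hn.2.symm)
  exact mem_closure_of_tendsto (value_tendsto.prodMk_nhds fderiv_tendsto)
    (Eventually.of_forall fun n => ⟨φ n, rfl⟩)

end FormDomain

section Slices

variable {w : ℝ × ℝ → ℝ}

lemma hasDerivAt_slice_snd (hw : Differentiable ℝ w) (x y : ℝ) :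
    HasDerivAt (fun t => w (x, t)) (fderiv ℝ w (x, y) (0, 1)) y :=
  (hw (x, y)).hasFDerivAt.comp_hasDerivAt y ((hasDerivAt_const y x).prodMk (hasDerivAt_id y))

lemma continuous_fderiv_apply_const (hw : ContDiff ℝ 1 w) (e : ℝ × ℝ) :
    Continuous fun p => fderiv ℝ w p e :=
  (hw.continuous_fderiv one_ne_zero).clm_apply continuous_const

lemma fderiv_comp_swap_apply (p e : ℝ × ℝ) :
    fderiv ℝ (w ∘ Prod.swap) p e = fderiv ℝ w p.swap e.swap :=
  DFunLike.congr_fun ((ContinuousLinearEquiv.prodComm ℝ ℝ ℝ).comp_right_fderiv (f := w)) e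

end Slices

section UnitSquare

open ProbabilityTheory

instance isProbabilityMeasure_restrict_II : IsProbabilityMeasure (volume.restrict II) :=
  ⟨by simp [II]⟩

lemma setIntegral_II (f : ℝ → ℝ) : ∫ x in II, f x = ∫ x in (-1)..0, f x := by
  rw [intervalIntegral.integral_of_le (by norm_num), integral_Ioc_eq_integral_Ioo, II]

lemma pi_sq_mul_variance_le {f : ℝ → ℝ} (hf : ContDiff ℝ 1 f) :
    π ^ 2 * Var[f; volume.restrict II] ≤ ∫ x in II, deriv f x ^ 2 := by
  have hint : IntegrableOn f II :=
    (hf.continuous.integrableOn_Icc (a := -1)).mono_set Ioo_subset_Icc_self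
  set m := ∫ x in II, f x with hm
  have hmean : ∫ x in (-1)..0, (f x - m) = 0 := by
    rw [← setIntegral_II, integral_sub hint (integrable_const m), ← hm]
    simp
  have := wirtinger_of_integral_eq_zero (by norm_num) (hf.sub contDiff_const) hmean
  simpa [variance_eq_integral hf.continuous.aemeasurable, ← hm, setIntegral_II] using this

variable {w : ℝ × ℝ → ℝ}

lemma integrable_prod_restrict_II (hw : Continuous w) :
    Integrable w ((volume.restrict II).prod (volume.restrict II)) := by
  rw [Measure.prod_restrict, ← Measure.volume_eq_prod]
  refine (hw.integrableOn_Icc (a := (-1, -1)) (b := (0, 0))).mono_set ?_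
  rw [← Icc_prod_Icc]
  exact prod_mono Ioo_subset_Icc_self Ioo_subset_Icc_self

lemma integrable_fderiv_sq_prod_restrict_II (hw : ContDiff ℝ 1 w) (e : ℝ × ℝ) :
    Integrable (fun p => fderiv ℝ w p e ^ 2) ((volume.restrict II).prod (volume.restrict II)) :=
  integrable_prod_restrict_II ((continuous_fderiv_apply_const hw e).pow 2)

lemma memLp_two_prod_restrict_II (hw : Continuous w) :
    MemLp w 2 ((volume.restrict II).prod (volume.restrict II)) :=
  (memLp_two_iff_integrable_sq hw.aestronglyMeasurable).2
    (integrable_prod_restrict_II (hw.pow 2))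

lemma pi_sq_mul_integral_variance_le (hw : ContDiff ℝ 1 w) :
    π ^ 2 * ∫ x in II, Var[fun y => w (x, y); volume.restrict II] ≤
      ∫ p, fderiv ℝ w p (0, 1) ^ 2 ∂(volume.restrict II).prod (volume.restrict II) := by
  have hint := integrable_fderiv_sq_prod_restrict_II hw (0, 1)
  rw [integral_prod _ hint, ← integral_const_mul]
  refine integral_mono_of_nonneg
    (ae_of_all _ fun x => mul_nonneg (sq_nonneg π) (variance_nonneg _ _))
    hint.integral_prod_left (ae_of_all _ fun x => ?_)
  simpa only [(hasDerivAt_slice_snd (hw.differentiable one_ne_zero) x _).deriv] using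
    pi_sq_mul_variance_le (f := fun y => w (x, y)) (by fun_prop)

lemma pi_sq_mul_integral_variance_swap_le (hw : ContDiff ℝ 1 w) :
    π ^ 2 * ∫ y in II, Var[fun x => w (x, y); volume.restrict II] ≤
      ∫ p, fderiv ℝ w p (1, 0) ^ 2 ∂(volume.restrict II).prod (volume.restrict II) := by
  have h := pi_sq_mul_integral_variance_le (w := w ∘ Prod.swap)
    (hw.comp (contDiff_snd.prodMk contDiff_fst))
  simp only [fderiv_comp_swap_apply, Prod.swap_prod_mk] at h
  rwa [integral_prod_swap fun p => fderiv ℝ w p (1, 0) ^ 2] at h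

/-- Tensorization of the variance (Efron–Stein) reduces the Poincaré inequality on the square to
the Wirtinger inequality on slices, with the same constant. -/
lemma pi_sq_mul_variance_prod_le (hw : ContDiff ℝ 1 w) :
    π ^ 2 * Var[w; (volume.restrict II).prod (volume.restrict II)] ≤
      ∫ p, gradSq2 w p ∂(volume.restrict II).prod (volume.restrict II) := by
  calc _ ≤ π ^ 2 * ((∫ x in II, Var[fun y => w (x, y); volume.restrict II]) +
        ∫ y in II, Var[fun x => w (x, y); volume.restrict II]) := by
        gcongr
        exact variance_prod_le (memLp_two_prod_restrict_II hw.continuous)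
    _ ≤ _ := by
        rw [mul_add, add_comm]
        unfold gradSq2
        rw [integral_add (integrable_fderiv_sq_prod_restrict_II hw _)
          (integrable_fderiv_sq_prod_restrict_II hw _)]
        exact add_le_add (pi_sq_mul_integral_variance_swap_le hw)
          (pi_sq_mul_integral_variance_le hw)

lemma poincare_unit_square (hw : ContDiff ℝ 1 w) :
    π ^ 2 * ((∫ p in II ×ˢ II, w p ^ 2) - (∫ p in II ×ˢ II, w p) ^ 2) ≤
      ∫ p in II ×ˢ II, gradSq2 w p := by
  have h := pi_sq_mul_variance_prod_le hw
  rw [variance_eq_sub (memLp_two_prod_restrict_II hw.continuous)] at h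
  simpa only [Measure.prod_restrict, ← Measure.volume_eq_prod, Pi.pow_apply] using h

end UnitSquare

section BrokenGuide

lemma isOpen_Gam : IsOpen Gam := by
  have hmin : Continuous fun p : ℝ × ℝ => min p.1 p.2 := by fun_prop
  exact isOpen_Ioo.preimage hmin

lemma Gam_eq_union : Gam = (II ×ˢ II ∪ II ×ˢ Ici 0) ∪ Ici 0 ×ˢ II := by
  ext ⟨x, y⟩
  simp only [Gam, II, mem_ofPred_eq, mem_union, mem_prod, mem_Ioo, mem_Ici, lt_min_iff, min_lt_iff]
  grind

lemma setIntegral_Gam {g : ℝ × ℝ → ℝ} (hg : Integrable g) :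
    ∫ p in Gam, g p = (∫ p in II ×ˢ II, g p) + (∫ p in II ×ˢ Ici 0, g p)
      + ∫ p in Ici 0 ×ˢ II, g p := by
  have hI : MeasurableSet II := measurableSet_Ioo
  have hdisj : Disjoint II (Ici 0) := Set.disjoint_left.2 fun _ hx hx' => hx.2.not_ge hx'
  rw [Gam_eq_union,
    setIntegral_union _ (measurableSet_Ici.prod hI) hg.integrableOn hg.integrableOn,
    setIntegral_union (disjoint_prod.2 (Or.inr hdisj)) (hI.prod measurableSet_Ici)
      hg.integrableOn hg.integrableOn]
  exact (disjoint_prod.2 (Or.inl hdisj)).union_left (disjoint_prod.2 (Or.inl hdisj))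

variable {w : ℝ × ℝ → ℝ}

lemma integrable_sq_of_hasCompactSupport {g : ℝ × ℝ → ℝ} (hg : Continuous g)
    (hgs : HasCompactSupport g) : Integrable fun p => g p ^ 2 :=
  (hg.pow 2).integrable_of_hasCompactSupport (hgs.comp_left (zero_pow two_ne_zero))

lemma integrable_gradSq2 (hw : ContDiff ℝ 1 w) (hs : HasCompactSupport w) :
    Integrable (gradSq2 w) :=
  have integrable_fderiv_sq (e : ℝ × ℝ) : Integrable fun p => fderiv ℝ w p e ^ 2 :=
    integrable_sq_of_hasCompactSupport (continuous_fderiv_apply_const hw e) (hs.fderiv_apply ℝ e)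
  (integrable_fderiv_sq _).add (integrable_fderiv_sq _)

lemma gradSq2_comp_swap (p : ℝ × ℝ) : gradSq2 (w ∘ Prod.swap) p = gradSq2 w p.swap := by
  simp only [gradSq2, fderiv_comp_swap_apply, Prod.swap_prod_mk, add_comm]

lemma pi_sq_mul_integral_slice_le (hw : ContDiff ℝ 1 w) {x : ℝ} (h₁ : w (x, -1) = 0)
    (h₀ : w (x, 0) = 0) :
    π ^ 2 * ∫ y in II, w (x, y) ^ 2 ≤ ∫ y in II, gradSq2 w (x, y) := by
  have hslice : ContDiff ℝ 1 fun y => w (x, y) := by fun_prop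
  have wirtinger := wirtinger_of_eq_zero_endpoints (by norm_num) hslice h₁ h₀
  have deriv_slice (y : ℝ) := (hasDerivAt_slice_snd (hw.differentiable one_ne_zero) x y).deriv
  have (e : ℝ × ℝ) : Continuous fun p => fderiv ℝ w p e := continuous_fderiv_apply_const hw e
  simp only [setIntegral_II]
  calc _ ≤ ∫ y in (-1)..0, fderiv ℝ w (x, y) (0, 1) ^ 2 := by
        simpa [deriv_slice] using wirtinger
    _ ≤ _ := by
        refine intervalIntegral.integral_mono_on (by norm_num)
          (Continuous.intervalIntegrable (by fun_prop) _ _)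
          (Continuous.intervalIntegrable (by unfold gradSq2; fun_prop) _ _) fun y _ => ?_
        exact le_add_of_nonneg_left (sq_nonneg _)

lemma pi_sq_mul_integral_strip_le (hw : ContDiff ℝ 1 w) (hs : HasCompactSupport w) {s : Set ℝ}
    (hsm : MeasurableSet s) (h₁ : ∀ x ∈ s, w (x, -1) = 0) (h₀ : ∀ x ∈ s, w (x, 0) = 0) :
    π ^ 2 * ∫ p in s ×ˢ II, w p ^ 2 ≤ ∫ p in s ×ˢ II, gradSq2 w p := by
  have hsq := (integrable_sq_of_hasCompactSupport hw.continuous hs).integrableOn (s := s ×ˢ II)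
  have hgrad := (integrable_gradSq2 hw hs).integrableOn (s := s ×ˢ II)
  rw [Measure.volume_eq_prod, IntegrableOn, ← Measure.prod_restrict] at hsq hgrad
  rw [Measure.volume_eq_prod, ← Measure.prod_restrict, integral_prod _ hsq, integral_prod _ hgrad,
    ← integral_const_mul]
  exact setIntegral_mono_on (hsq.integral_prod_left.const_mul _) hgrad.integral_prod_left hsm
    fun x hx => pi_sq_mul_integral_slice_le hw (h₁ x hx) (h₀ x hx)

lemma pi_sq_mul_integral_strip_swap_le (hw : ContDiff ℝ 1 w) (hs : HasCompactSupport w) {s : Set ℝ}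
    (hsm : MeasurableSet s) (h₁ : ∀ y ∈ s, w (-1, y) = 0) (h₀ : ∀ y ∈ s, w (0, y) = 0) :
    π ^ 2 * ∫ p in II ×ˢ s, w p ^ 2 ≤ ∫ p in II ×ˢ s, gradSq2 w p := by
  have h := pi_sq_mul_integral_strip_le (w := w ∘ Prod.swap)
    (hw.comp (contDiff_snd.prodMk contDiff_fst))
    (hs.comp_homeomorph (Homeomorph.prodComm ℝ ℝ)) hsm h₁ h₀
  simp only [gradSq2_comp_swap, Function.comp_apply] at h
  rwa [Measure.volume_eq_prod, setIntegral_prod_swap _ _ (gradSq2 w),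
    setIntegral_prod_swap _ _ fun p => w p ^ 2] at h

/-- On the arms the Dirichlet condition alone gives the bound; on the square it holds only for
functions of mean zero. -/
theorem energy_lower_bound (hw : ContDiff ℝ 1 w) (hs : HasCompactSupport w)
    (h0 : ∀ p ∉ Gam, w p = 0) :
    π ^ 2 * ((∫ p in Gam, w p ^ 2) - (∫ p in II ×ˢ II, w p) ^ 2) ≤ ∫ p in Gam, gradSq2 w p := by
  rw [setIntegral_Gam (integrable_sq_of_hasCompactSupport hw.continuous hs),
    setIntegral_Gam (integrable_gradSq2 hw hs)]
  have square := poincare_unit_square hw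
  have horizontal_arm := pi_sq_mul_integral_strip_le hw hs (s := Ici 0) measurableSet_Ici
    (fun x _ => h0 _ (by simp [Gam])) (fun x hx => h0 _ (by simp_all [Gam]))
  have vertical_arm := pi_sq_mul_integral_strip_swap_le hw hs (s := Ici 0) measurableSet_Ici
    (fun y _ => h0 _ (by simp [Gam])) (fun y hy => h0 _ (by simp_all [Gam]))
  linarith

end BrokenGuide

section DirichletForm

open TopologicalSpace
open scoped InnerProductSpace Distributions

lemma inner_toLp_toLp {α : Type*} [MeasurableSpace α] {μ : Measure α} {f g : α → ℝ}
    (hf : MemLp f 2 μ) (hg : MemLp g 2 μ) : ⟪hf.toLp f, hg.toLp g⟫_ℝ = ∫ x, f x * g x ∂μ := by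
  rw [L2.inner_def]
  refine integral_congr_ae ?_
  filter_upwards [hf.coeFn_toLp, hg.coeFn_toLp] with x hfx hgx
  simp [hfx, hgx, mul_comm]

section

variable {E : Type*} [NormedAddCommGroup E] [NormedSpace ℝ E] [MeasurableSpace E]
  {Ω : Opens E} {μ : Measure E}

lemma MemFormDomain.memLp_fderiv_apply {u : E → ℝ} (hu : MemFormDomain Ω μ u) (e : E) :
    MemLp (fun p => fderiv ℝ u p e) 2 (μ.restrict Ω) :=
  (ContinuousLinearMap.apply ℝ ℝ e).comp_memLp' hu.memLp_fderiv

variable [BorelSpace E]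

lemma compLpL_apply_fderivL2 (e : E) (u : formDomain Ω μ) :
    (ContinuousLinearMap.apply ℝ ℝ e).compLpL 2 (μ.restrict Ω) (fderivL2 u) =
      (u.2.memLp_fderiv_apply e).toLp _ := by
  refine Lp.ext ((ContinuousLinearMap.coeFn_compLpL _ _).trans ?_)
  filter_upwards [u.2.memLp_fderiv.coeFn_toLp, (u.2.memLp_fderiv_apply e).coeFn_toLp]
    with p hp hpe
  rw [hpe]
  exact DFunLike.congr_fun hp e

lemma inner_toL2 (u v : formDomain Ω μ) :
    ⟪toL2 u, toL2 v⟫_ℝ = ∫ p in Ω, u.1 p * v.1 p ∂μ :=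
  inner_toLp_toLp u.2.memLp v.2.memLp

lemma norm_toL2_sq (u : formDomain Ω μ) : ‖toL2 u‖ ^ 2 = ∫ p in Ω, u.1 p ^ 2 ∂μ := by
  rw [← real_inner_self_eq_norm_sq, inner_toL2]
  simp only [pow_two]

end

variable {Ω : Opens (ℝ × ℝ)} {μ : Measure (ℝ × ℝ)}

/-- The two partial derivatives of an `L²` field of covectors on the plane. The target carries the
Euclidean norm of the pair, so that its inner product gives the Dirichlet form. -/
def partialsL2 (μ : Measure (ℝ × ℝ)) :
    Lp (ℝ × ℝ →L[ℝ] ℝ) 2 μ →L[ℝ] WithLp 2 (Lp ℝ 2 μ × Lp ℝ 2 μ) :=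
  (WithLp.prodContinuousLinearEquiv 2 ℝ _ _).symm.toContinuousLinearMap ∘L
    (((ContinuousLinearMap.apply ℝ ℝ (1, 0)).compLpL 2 μ).prod
      ((ContinuousLinearMap.apply ℝ ℝ (0, 1)).compLpL 2 μ))

/-- The gradient as an operator from the form domain of a plane domain to `L²`. -/
def gradL2 : formDomain Ω μ →ₗ[ℝ] WithLp 2 (Lp ℝ 2 (μ.restrict Ω) × Lp ℝ 2 (μ.restrict Ω)) :=
  (partialsL2 (μ.restrict Ω)).toLinearMap ∘ₗ fderivL2

lemma inner_gradL2 (u v : formDomain Ω μ) :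
    ⟪gradL2 u, gradL2 v⟫_ℝ =
      ∫ p in Ω, (pd1 u p * pd1 v p + pd2 u p * pd2 v p) ∂μ := by
  have hint (e : ℝ × ℝ) := (u.2.memLp_fderiv_apply e).integrable_mul (v.2.memLp_fderiv_apply e)
  refine Eq.trans ?_ (integral_add (hint (1, 0)) (hint (0, 1))).symm
  refine Eq.trans ?_ (congrArg₂ (· + ·)
    (inner_toLp_toLp (u.2.memLp_fderiv_apply (1, 0)) (v.2.memLp_fderiv_apply (1, 0)))
    (inner_toLp_toLp (u.2.memLp_fderiv_apply (0, 1)) (v.2.memLp_fderiv_apply (0, 1))))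
  simp only [← compLpL_apply_fderivL2]
  rfl

lemma norm_gradL2_sq (u : formDomain Ω μ) : ‖gradL2 u‖ ^ 2 = ∫ p in Ω, gradSq2 u p ∂μ := by
  rw [← real_inner_self_eq_norm_sq, inner_gradL2]
  simp only [gradSq2, pd1, pd2, pow_two]

lemma mem_closure_range_testToForm_gradL2 [μ.IsAddHaarMeasure] (u : formDomain Ω μ) :
    (toL2 u, gradL2 u) ∈
      closure (range fun φ : 𝓓^{1}(Ω, ℝ) => (toL2 (testToForm φ), gradL2 (testToForm φ))) := by
  have hcont := (continuous_id (X := Lp ℝ 2 (μ.restrict Ω))).prodMap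
    (partialsL2 (μ.restrict Ω)).continuous
  have h := mem_closure_image hcont.continuousAt (mem_closure_range_testToForm u)
  rwa [← range_comp] at h

/-- The equation `-Δu = lam * u` in `Ω`, in the weak sense: tested against compactly supported
`C¹` functions. -/
def IsWeakSolution (lam : ℝ) (u : formDomain Ω μ) : Prop :=
  ∀ φ : 𝓓^{1}(Ω, ℝ),
    ∫ p in Ω, (pd1 u p * pd1 φ p + pd2 u p * pd2 φ p) ∂μ = lam * ∫ p in Ω, u.1 p * φ p ∂μ

lemma IsWeakSolution.inner_gradL2_eq [μ.IsAddHaarMeasure] {lam : ℝ} {u : formDomain Ω μ}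
    (hu : IsWeakSolution lam u) (v : formDomain Ω μ) :
    ⟪gradL2 u, gradL2 v⟫_ℝ = lam * ⟪toL2 u, toL2 v⟫_ℝ := by
  have approximable := mem_closure_range_testToForm_gradL2 v
  refine closure_minimal (t := {x | ⟪gradL2 u, x.2⟫_ℝ = lam * ⟪toL2 u, x.1⟫_ℝ}) ?_
    (isClosed_eq (by fun_prop) (by fun_prop)) approximable
  rintro _ ⟨φ, rfl⟩
  change ⟪gradL2 u, gradL2 (testToForm φ)⟫_ℝ = lam * ⟪toL2 u, toL2 (testToForm φ)⟫_ℝ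
  rw [inner_gradL2, inner_toL2]
  exact hu φ

end DirichletForm

section GuideForm

open TopologicalSpace
open scoped Distributions

/-- The broken guide as an open set, to be used as the domain of test functions. -/
def guide : Opens (ℝ × ℝ) := ⟨Gam, isOpen_Gam⟩

lemma measurableSet_II_prod_II : MeasurableSet (II ×ˢ II) :=
  measurableSet_Ioo.prod measurableSet_Ioo

lemma volume_restrict_guide_II_prod_II_ne_top : volume.restrict guide (II ×ˢ II) ≠ ⊤ := by
  refine ((Measure.restrict_apply_le _ _).trans_lt ?_).ne
  simp [Measure.volume_eq_prod, II]

/-- The integral over the corner square, as a functional on `L²` of the guide. -/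
def cornerIntegral : Lp ℝ 2 (volume.restrict (guide : Set (ℝ × ℝ))) →L[ℝ] ℝ :=
  innerSL ℝ (indicatorConstLp 2 measurableSet_II_prod_II
    volume_restrict_guide_II_prod_II_ne_top 1)

lemma cornerIntegral_toL2 (u : formDomain guide volume) :
    cornerIntegral (toL2 u) = ∫ p in II ×ˢ II, u.1 p := by
  have hsub : II ×ˢ II ⊆ (guide : Set (ℝ × ℝ)) := by
    change _ ⊆ Gam
    rw [Gam_eq_union]
    exact subset_union_left.trans subset_union_left
  rw [cornerIntegral, innerSL_apply_apply, L2.inner_indicatorConstLp_one,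
    Measure.restrict_restrict_of_subset hsub]
  exact integral_congr_ae (ae_restrict_of_ae_restrict_of_subset hsub u.2.memLp.coeFn_toLp)

/-- The energy inequality is a closed condition on `(u, ∇u)`, so it passes from the test functions
to the form domain. -/
theorem norm_sq_sub_cornerIntegral_sq_le (u : formDomain guide volume) :
    π ^ 2 * (‖toL2 u‖ ^ 2 - cornerIntegral (toL2 u) ^ 2) ≤ ‖gradL2 u‖ ^ 2 := by
  have approximable := mem_closure_range_testToForm_gradL2 u
  refine closure_minimal (t := {x | π ^ 2 * (‖x.1‖ ^ 2 - cornerIntegral x.1 ^ 2) ≤ ‖x.2‖ ^ 2}) ?_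
    (isClosed_le (by fun_prop) (by fun_prop)) approximable
  rintro _ ⟨φ, rfl⟩
  have energy := energy_lower_bound φ.contDiff φ.hasCompactSupport
    (memFormDomain_testFunction (μ := volume) φ).eq_zero
  change π ^ 2 * (‖toL2 (testToForm φ)‖ ^ 2 - cornerIntegral (toL2 (testToForm φ)) ^ 2) ≤
    ‖gradL2 (testToForm φ)‖ ^ 2
  rw [norm_toL2_sq, norm_gradL2_sq, cornerIntegral_toL2]
  exact energy

lemma pi_sq_mul_norm_toL2_sq_le_norm_gradL2_sq {u : formDomain guide volume}
    (hu : cornerIntegral (toL2 u) = 0) :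
    π ^ 2 * ‖toL2 u‖ ^ 2 ≤ ‖gradL2 u‖ ^ 2 := by
  simpa [hu] using norm_sq_sub_cornerIntegral_sq_le u

end GuideForm

section ClassicalSolutions

open TopologicalSpace
open scoped Distributions

lemma integrable_mul_of_tsupport_subset {X : Type*} [TopologicalSpace X] [MeasurableSpace X]
    [OpensMeasurableSpace X] {μ : Measure X} [IsFiniteMeasureOnCompacts μ] {Ω : Set X} {f ψ : X → ℝ}
    (hΩ : IsOpen Ω) (hf : ContinuousOn f Ω) (hψ : Continuous ψ) (hs : HasCompactSupport ψ)
    (hψΩ : tsupport ψ ⊆ Ω) : Integrable (fun p => f p * ψ p) μ :=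
  ((hf.mul hψ.continuousOn).continuous_of_tsupport_subset hΩ
    (tsupport_mul_subset_right.trans hψΩ)).integrable_of_hasCompactSupport hs.mul_left

section

variable {E : Type*} [NormedAddCommGroup E] [NormedSpace ℝ E] [MeasurableSpace E] [BorelSpace E]
  {Ω : Opens E} {μ : Measure E} {f : E → ℝ}

lemma integrable_mul_testFunction [IsFiniteMeasureOnCompacts μ] (hf : ContinuousOn f Ω)
    (φ : 𝓓^{1}(Ω, ℝ)) : Integrable (fun p => f p * φ p) μ :=
  integrable_mul_of_tsupport_subset Ω.isOpen hf φ.continuous φ.hasCompactSupport φ.tsupport_subset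

lemma integrable_mul_fderiv_testFunction [IsFiniteMeasureOnCompacts μ] (hf : ContinuousOn f Ω)
    (φ : 𝓓^{1}(Ω, ℝ)) (e : E) : Integrable (fun p => f p * fderiv ℝ φ p e) μ :=
  have hφ : ContDiff ℝ 1 φ := φ.contDiff
  integrable_mul_of_tsupport_subset Ω.isOpen hf
    ((hφ.continuous_fderiv one_ne_zero).clm_apply continuous_const)
    (φ.hasCompactSupport.fderiv_apply ℝ e)
    ((tsupport_fderiv_apply_subset ℝ e).trans φ.tsupport_subset)

lemma setIntegral_mul_fderiv_testFunction [FiniteDimensional ℝ E] [μ.IsAddHaarMeasure]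
    (hf : ContDiffOn ℝ 1 f Ω) (φ : 𝓓^{1}(Ω, ℝ)) (e : E) :
    ∫ p in Ω, f p * fderiv ℝ φ p e ∂μ = -∫ p in Ω, fderiv ℝ f p e * φ p ∂μ := by
  have hφ : ContDiff ℝ 1 φ := φ.contDiff
  have hfderiv : ContinuousOn (fun p => fderiv ℝ f p e) Ω :=
    (hf.continuousOn_fderiv_of_isOpen Ω.isOpen le_rfl).clm_apply continuousOn_const
  rw [setIntegral_eq_integral_of_forall_compl_eq_zero,
    setIntegral_eq_integral_of_forall_compl_eq_zero]
  · exact integral_mul_fderiv_eq_neg_fderiv_mul_of_integrable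
      (integrable_mul_testFunction hfderiv φ)
      (integrable_mul_fderiv_testFunction hf.continuousOn φ e)
      (integrable_mul_testFunction hf.continuousOn φ)
      (fun p hp => (hf.contDiffAt (Ω.isOpen.mem_nhds (φ.tsupport_subset hp))).differentiableAt
        one_ne_zero)
      (fun p _ => hφ.differentiable one_ne_zero p)
  · intro p hp
    rw [image_eq_zero_of_notMem_tsupport fun h => hp (φ.tsupport_subset h), mul_zero]
  · intro p hp
    rw [fderiv_of_notMem_tsupport ℝ fun h => hp (φ.tsupport_subset h), zero_apply, mul_zero]

end

variable {Ω : Opens (ℝ × ℝ)} {μ : Measure (ℝ × ℝ)} {u : ℝ × ℝ → ℝ} {lam : ℝ}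

lemma norm_fderiv_sq_le_two_mul_gradSq2 (p : ℝ × ℝ) : ‖fderiv ℝ u p‖ ^ 2 ≤ 2 * gradSq2 u p := by
  have norm_le : ‖fderiv ℝ u p‖ ≤ |fderiv ℝ u p (1, 0)| + |fderiv ℝ u p (0, 1)| := by
    refine ContinuousLinearMap.opNorm_le_bound _ (by positivity) fun e => ?_
    have he : e = e.1 • (1, 0) + e.2 • (0, 1) := by simp
    calc ‖fderiv ℝ u p e‖
        = ‖e.1 * fderiv ℝ u p (1, 0) + e.2 * fderiv ℝ u p (0, 1)‖ := by
          conv_lhs => rw [he, map_add, map_smul, map_smul, smul_eq_mul, smul_eq_mul]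
      _ ≤ ‖e.1‖ * |fderiv ℝ u p (1, 0)| + ‖e.2‖ * |fderiv ℝ u p (0, 1)| := by
          simpa only [norm_mul, norm_eq_abs] using norm_add_le (e.1 * _) (e.2 * _)
      _ ≤ ‖e‖ * |fderiv ℝ u p (1, 0)| + ‖e‖ * |fderiv ℝ u p (0, 1)| := by
          gcongr
          exacts [norm_fst_le e, norm_snd_le e]
      _ = (|fderiv ℝ u p (1, 0)| + |fderiv ℝ u p (0, 1)|) * ‖e‖ := by ring
  calc ‖fderiv ℝ u p‖ ^ 2
      ≤ (|fderiv ℝ u p (1, 0)| + |fderiv ℝ u p (0, 1)|) ^ 2 := by gcongr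
    _ ≤ 2 * (|fderiv ℝ u p (1, 0)| ^ 2 + |fderiv ℝ u p (0, 1)| ^ 2) := add_sq_le
    _ = 2 * gradSq2 u p := by rw [sq_abs, sq_abs, gradSq2]

lemma MemFormDomain.of_integrableOn (hc : Continuous u) (h0 : ∀ p ∉ Ω, u p = 0)
    (hu : ContDiffOn ℝ 1 u Ω) (hL : IntegrableOn (fun p => u p ^ 2) Ω μ)
    (hG : IntegrableOn (gradSq2 u) Ω μ) : MemFormDomain Ω μ u where
  continuous := hc
  eq_zero := h0
  contDiffOn := hu
  memLp := (memLp_two_iff_integrable_sq hc.aestronglyMeasurable).2 hL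
  memLp_fderiv := by
    have hmeas := (measurable_fderiv ℝ u).aestronglyMeasurable (μ := μ.restrict Ω)
    refine (memLp_two_iff_integrable_sq_norm hmeas).2
      ((hG.const_mul 2).mono' (hmeas.norm.pow 2) (ae_of_all _ fun p => ?_))
    rw [norm_pow, norm_norm]
    exact norm_fderiv_sq_le_two_mul_gradSq2 p

lemma isWeakSolution_of_neg_lap2_eq [μ.IsAddHaarMeasure] {u : formDomain Ω μ}
    (hu : ContDiffOn ℝ 2 u.1 Ω) (heq : ∀ p ∈ Ω, -lap2 u p = lam * u.1 p) :
    IsWeakSolution lam u := by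
  intro φ
  have contDiffOn_partial (e : ℝ × ℝ) : ContDiffOn ℝ 1 (fun p => fderiv ℝ u.1 p e) Ω :=
    (hu.fderiv_of_isOpen Ω.isOpen one_add_one_eq_two.le).clm_apply contDiffOn_const
  have continuousOn_partial_partial (e : ℝ × ℝ) :
      ContinuousOn (fun p => fderiv ℝ (fun q => fderiv ℝ u.1 q e) p e) Ω :=
    ((contDiffOn_partial e).continuousOn_fderiv_of_isOpen Ω.isOpen le_rfl).clm_apply
      continuousOn_const
  have by_parts (e : ℝ × ℝ) :=
    setIntegral_mul_fderiv_testFunction (μ := μ) (contDiffOn_partial e) φ e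
  have integrable_left (e : ℝ × ℝ) := (integrable_mul_fderiv_testFunction (μ := μ)
    (contDiffOn_partial e).continuousOn φ e).integrableOn (s := Ω)
  have integrable_right (e : ℝ × ℝ) := (integrable_mul_testFunction (μ := μ)
    (continuousOn_partial_partial e) φ).integrableOn (s := Ω)
  calc ∫ p in Ω, (pd1 u p * pd1 φ p + pd2 u p * pd2 φ p) ∂μ
      = (∫ p in Ω, pd1 u p * pd1 φ p ∂μ) + ∫ p in Ω, pd2 u p * pd2 φ p ∂μ :=
        integral_add (integrable_left (1, 0)) (integrable_left (0, 1))
    _ = -((∫ p in Ω, pd1 (pd1 u) p * φ p ∂μ) + ∫ p in Ω, pd2 (pd2 u) p * φ p ∂μ) := by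
        rw [neg_add]
        exact congrArg₂ (· + ·) (by_parts (1, 0)) (by_parts (0, 1))
    _ = ∫ p in Ω, -(pd1 (pd1 u) p * φ p + pd2 (pd2 u) p * φ p) ∂μ := by
        rw [integral_neg]
        exact congrArg Neg.neg
          (integral_add (integrable_right (1, 0)) (integrable_right (0, 1))).symm
    _ = ∫ p in Ω, lam * (u.1 p * φ p) ∂μ := by
        refine setIntegral_congr_fun Ω.isOpen.measurableSet fun p hp => ?_
        rw [← mul_assoc, ← heq p hp, lap2]
        ring
    _ = lam * ∫ p in Ω, u.1 p * φ p ∂μ := integral_const_mul _ _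

end ClassicalSolutions

section Main

open TopologicalSpace Module
open scoped Distributions

namespace IsEigenGam

variable {lam : ℝ} {u : ℝ × ℝ → ℝ}

lemma mem_formDomain (hu : IsEigenGam lam u) : u ∈ formDomain guide volume :=
  have ⟨hc, h0, hC2, hL, hG, _⟩ := hu
  MemFormDomain.of_integrableOn hc h0 (hC2.of_le one_le_two) hL hG

lemma isWeakSolution (hu : IsEigenGam lam u) :
    IsWeakSolution lam (⟨u, hu.mem_formDomain⟩ : formDomain guide volume) :=
  have ⟨_, _, hC2, _, _, heq, _⟩ := hu
  isWeakSolution_of_neg_lap2_eq hC2 heq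

end IsEigenGam

theorem pi_sq_le_sSup_rayleigh {E : Submodule ℝ (ℝ × ℝ → ℝ)} (hE : E ≤ formDomain guide volume)
    (hE2 : 1 < finrank ℝ E) :
    π ^ 2 ≤ sSup {r | ∃ u ∈ E, (∫ p in Gam, (u p) ^ 2) ≠ 0 ∧
      r = (∫ p in Gam, gradSq2 u p) / ∫ p in Gam, (u p) ^ 2} := by
  let j := Submodule.inclusion hE
  have rayleigh := le_sSup_rayleigh (ι := toL2 ∘ₗ j) (S := gradL2 ∘ₗ j)
    (ℓ := cornerIntegral.toLinearMap ∘ₗ toL2 ∘ₗ j) hE2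
    (toL2_injective.comp (Submodule.inclusion_injective hE))
    fun _ hu => pi_sq_mul_norm_toL2_sq_le_norm_gradL2_sq hu
  simp only [LinearMap.comp_apply, norm_toL2_sq, norm_gradL2_sq] at rayleigh
  exact rayleigh.trans_eq (congrArg sSup (Set.ext fun r =>
    ⟨fun ⟨u, hu⟩ => ⟨u.1, u.2, hu⟩, fun ⟨u, hE, hu⟩ => ⟨⟨u, hE⟩, hu⟩⟩))

theorem not_linearIndependent_of_isWeakSolution_of_lt_pi_sq {lam lam' : ℝ} (hlam : lam < π ^ 2)
    (hlam' : lam' < π ^ 2) {u u' : formDomain guide volume} (hu : IsWeakSolution lam u)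
    (hu' : IsWeakSolution lam' u') : ¬ LinearIndependent ℝ ![u, u'] :=
  not_linearIndependent_of_eigenvalues_lt (ℓ := cornerIntegral.toLinearMap ∘ₗ toL2) toL2_injective
    (fun _ => pi_sq_mul_norm_toL2_sq_le_norm_gradL2_sq) hlam hlam' hu.inner_gradL2_eq
    hu'.inner_gradL2_eq

theorem second_rayleigh_quotient_Gam_ge_pi_sq_general :
    (∀ E : Submodule ℝ (ℝ × ℝ → ℝ), E ≤ formDomain guide volume → 1 < finrank ℝ E →
      π ^ 2 ≤ sSup {r | ∃ u ∈ E, (∫ p in Gam, (u p) ^ 2) ≠ 0 ∧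
        r = (∫ p in Gam, gradSq2 u p) / ∫ p in Gam, (u p) ^ 2}) ∧
    (∀ lam lam' : ℝ, lam < π ^ 2 → lam' < π ^ 2 → ∀ u u' : formDomain guide volume,
      IsWeakSolution lam u → IsWeakSolution lam' u' → ¬ LinearIndependent ℝ ![u, u']) :=
  ⟨fun _ => pi_sq_le_sSup_rayleigh,
    fun _ _ hlam hlam' _ _ => not_linearIndependent_of_isWeakSolution_of_lt_pi_sq hlam hlam'⟩

end Main

/-- Remark 2.2: the second Rayleigh quotient of the Dirichlet
Laplacian on the broken guide `Γ` is at least `π²` (min-max over two-dimensional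
subspaces of `H¹₀(Γ)`); consequently there is at most one eigenvalue below `π²`:
any two eigenfunctions with eigenvalues below `π²` are linearly dependent. -/
theorem second_rayleigh_quotient_Gam_ge_pi_sq :
    (∀ E : Submodule ℝ (ℝ × ℝ → ℝ),
      (∀ u ∈ E, ContDiff ℝ 1 u ∧ HasCompactSupport u ∧ tsupport u ⊆ Gam) →
      Module.finrank ℝ E = 2 →
      π ^ 2 ≤ sSup {r | ∃ u ∈ E, (∫ p in Gam, (u p) ^ 2) ≠ 0 ∧
        r = (∫ p in Gam, gradSq2 u p) / ∫ p in Gam, (u p) ^ 2}) ∧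
    (∀ lam lam' : ℝ, lam < π ^ 2 → lam' < π ^ 2 →
      ∀ u u' : ℝ × ℝ → ℝ, IsEigenGam lam u → IsEigenGam lam' u' →
        ¬ LinearIndependent ℝ ![u, u']) := by
  obtain ⟨rayleigh, dependent⟩ := second_rayleigh_quotient_Gam_ge_pi_sq_general
  refine ⟨fun E hE hE2 => rayleigh E (fun u hu => ?_) (hE2 ▸ one_lt_two),
    fun lam lam' hlam hlam' u u' hu hu' hindep => ?_⟩
  · obtain ⟨hC1, hs, hΓ⟩ := hE u hu
    exact memFormDomain_testFunction ⟨u, hC1, hs, hΓ⟩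
  · refine dependent lam lam' hlam hlam' _ _ hu.isWeakSolution hu'.isWeakSolution
      (LinearIndependent.of_comp (formDomain guide volume).subtype ?_)
    convert! hindep using 1
    ext i : 1
    fin_cases i <;> rfl
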